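/- There exist ε₀ > 0 and C > 0 such that for every 0 < ε < ε₀, every pair of grid functions u, u' : ℤ → ℝ² with ‖u − v‖_{X_ε} ≤ ε and ‖u' − v‖_{X_ε} ≤ ε (where v is restricted to the grid by v_i^± = v^±(εi)), and all f, g : ℤ → ℝ² with finite X_ε norm: |⟨(δ²E_a[u] − δ²E_a[u'])f, g⟩_ε| ≤ C ε^(−1/2) ‖u − u'‖_{X_ε} ‖f‖_{X_ε} ‖g‖_{X_ε}. -/

import Mathlib

/-!
The second variation is a sum over bonds `(i, i + s)` of a coefficient `V''` or `U''`, evaluated at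
the deformed bond vector, times two bond increments. Three facts give the estimate.

* Integrating the decay of the fourth derivatives from infinity, the third and second derivatives
  are bounded by `K (1 + |x|)⁻⁵` and `K (1 + |x|)⁻⁴`, away from the origin in the case of `V`
  (`potential_decay`).
* Since `0 ≤ φ ≤ 1`, a configuration within `X_ε`-distance `ε` of the profile has its deformed bond
  `(i, i + s)` within `3/4 (1 + |s|)` of `s`; inside a chain even within `3/4 |s|`, so the
  singularity of `V` is avoided (`config_bounds`). The whole segment between two such bonds has the
  same property, so by the mean value inequality the coefficients differ by at most
  `C (1 + |s|)⁻⁴ ε^(-1/2) ‖u - u'‖`: the bond increments of `u - u'` are at most `1 + |s|` times the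
  sup norms of `D(u - u')` and `(u - u')^⊥`, and a sup norm is at most `ε^(-1/2)` times the weighted
  `ℓ²` norm (`chainCoeff_bounds`, `crossCoeff_bounds`).
* For fixed `s` the `ℓ²` norms in `i` of the bond increments of `f` and `g` are at most
  `2 (1 + |s|)` times the `X_ε` norms (`XFin_sq_bounds`). Cauchy–Schwarz in `i` leaves the convergent
  sum of `(1 + |s|)⁻²` over `s` (`schur_bound`), which also gives the absolute convergence needed to
  subtract the two infinite sums (`schur_diff`).
-/

noncomputable section
open MeasureTheory Filter

/-- Finite difference operator `D_s⁺`. -/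
def Ds (ε : ℝ) (s : ℤ) (g : ℤ → ℝ) (i : ℤ) : ℝ := (g (i + s) - g i) / ε

/-- Squared discrete `L²_ε` norm. -/
def nsq (ε : ℝ) (h : ℤ → ℝ) : ℝ := ε * ∑' i : ℤ, (h i) ^ 2

/-- Squared `X_ε` norm of a pair of grid functions. -/
def Xsq (ε : ℝ) (fp fm : ℤ → ℝ) : ℝ :=
  nsq ε (Ds ε 1 fp) + nsq ε (Ds ε 1 fm) + nsq ε (fun i => fp i - fm i)

/-- Finiteness of the `X_ε` norm of a pair of grid functions. -/
def XFin (ε : ℝ) (fp fm : ℤ → ℝ) : Prop :=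
  Summable (fun i : ℤ => (Ds ε 1 fp i) ^ 2) ∧ Summable (fun i : ℤ => (Ds ε 1 fm i) ^ 2) ∧
    Summable (fun i : ℤ => (fp i - fm i) ^ 2)

/-- The symmetry class `M_ε`: `f_i⁺ = −f_i⁻ = −f_{−i}⁺`. -/
def Meps (fp fm : ℤ → ℝ) : Prop := ∀ i : ℤ, fp i = -fm i ∧ -fm i = -fp (-i)

/-- First variation of the atomistic energy, `⟨δE_a[u], f⟩_ε`. -/
def dEa (ε : ℝ) (V U : ℝ → ℝ) (up um fp fm : ℤ → ℝ) : ℝ :=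
  (∑' i : ℤ, ∑' s : ℤ,
      if s = 0 then 0 else
        (1/2) * (deriv V ((s : ℝ) + ε * Ds ε s up i) * Ds ε s fp i +
          deriv V ((s : ℝ) + ε * Ds ε s um i) * Ds ε s fm i)) +
  ε * ∑' i : ℤ, ∑' s : ℤ,
      deriv U ((s : ℝ) - 1/2 + up (i + s) - um i) * (fp (i + s) - fm i)

/-- Second variation of the atomistic energy, `⟨δ²E_a[u]f, g⟩_ε`. -/
def d2Ea (ε : ℝ) (V U : ℝ → ℝ) (up um fp fm gp gm : ℤ → ℝ) : ℝ :=
  ε * (∑' i : ℤ, ∑' s : ℤ,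
      if s = 0 then 0 else
        (1/2) * (iteratedDeriv 2 V ((s : ℝ) + ε * Ds ε s up i) * Ds ε s fp i * Ds ε s gp i +
          iteratedDeriv 2 V ((s : ℝ) + ε * Ds ε s um i) * Ds ε s fm i * Ds ε s gm i)) +
  ε * ∑' i : ℤ, ∑' s : ℤ,
      iteratedDeriv 2 U ((s : ℝ) - 1/2 + up (i + s) - um i) *
        (fp (i + s) - fm i) * (gp (i + s) - gm i)

/-! ### Decay of the second and third derivatives of a potential -/

/-- One half of the tail estimate: `f - x⁻ⁿ` is increasing with limit `0`. -/
lemma le_inv_pow_of_deriv (n : ℕ) (f f' : ℝ → ℝ) (r : ℝ) (hr : 0 < r)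
    (hd : ∀ x, r ≤ x → HasDerivAt f (f' x) x)
    (hb : ∀ x, r ≤ x → |f' x| ≤ (n + 1 : ℕ) * (x ^ (n + 2))⁻¹)
    (hlim : Tendsto f atTop (nhds 0)) (x : ℝ) (hx : r ≤ x) : f x ≤ (x ^ (n + 1))⁻¹ := by
  have hG : ∀ y, r ≤ y → HasDerivAt (fun y => f y - (y ^ (n + 1))⁻¹)
      (f' y + (n + 1 : ℕ) * (y ^ (n + 2))⁻¹) y := by
    intro y hy
    have hy0 : y ≠ 0 := (hr.trans_le hy).ne'
    have h := (hd y hy).sub ((hasDerivAt_pow (n + 1) y).inv (pow_ne_zero _ hy0))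
    refine h.congr_deriv ?_
    simp only [Nat.add_sub_cancel]
    field_simp
    ring
  have hmono : MonotoneOn (fun y => f y - (y ^ (n + 1))⁻¹) (Set.Ici r) := by
    refine monotoneOn_of_deriv_nonneg (convex_Ici r)
      (fun y hy => (hG y hy).continuousAt.continuousWithinAt)
      (fun y hy => ((hG y (interior_subset hy)).differentiableAt).differentiableWithinAt) ?_
    intro y hy
    have hy' : r ≤ y := interior_subset hy
    rw [(hG y hy').deriv]
    have := (abs_le.1 (hb y hy')).1
    linarith
  have hl : Tendsto (fun y => f y - (y ^ (n + 1))⁻¹) atTop (nhds 0) := by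
    have := hlim.sub (tendsto_inv_atTop_zero.comp (tendsto_pow_atTop (α := ℝ) n.succ_ne_zero))
    simpa using this
  have : f x - (x ^ (n + 1))⁻¹ ≤ 0 := by
    refine ge_of_tendsto hl ((eventually_ge_atTop x).mono fun y hy => ?_)
    exact hmono hx (hx.trans hy) hy
  linarith

lemma abs_le_inv_pow_of_deriv (n : ℕ) (f f' : ℝ → ℝ) (r : ℝ) (hr : 0 < r)
    (hd : ∀ x, r ≤ x → HasDerivAt f (f' x) x)
    (hb : ∀ x, r ≤ x → |f' x| ≤ (n + 1 : ℕ) * (x ^ (n + 2))⁻¹)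
    (hlim : Tendsto f atTop (nhds 0)) (x : ℝ) (hx : r ≤ x) : |f x| ≤ (x ^ (n + 1))⁻¹ := by
  refine abs_le'.2 ⟨le_inv_pow_of_deriv n f f' r hr hd hb hlim x hx, ?_⟩
  refine le_inv_pow_of_deriv n (fun x => - f x) (fun x => - f' x) r hr
    (fun x hx => (hd x hx).neg) (fun x hx => ?_) (neg_zero (G := ℝ) ▸ hlim.neg) x hx
  rw [abs_neg]
  exact hb x hx

lemma hasDerivAt_iteratedDeriv {F : ℝ → ℝ} {x : ℝ} (h : ContDiffAt ℝ 4 F x) (k : ℕ) (hk : k < 4) :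
    HasDerivAt (iteratedDeriv k F) (iteratedDeriv (k + 1) F x) x := by
  have h1 : DifferentiableAt ℝ (iteratedDeriv k F) x := by
    have := (h.contDiffWithinAt (s := Set.univ)).differentiableWithinAt_iteratedDerivWithin
      (m := k) (by exact_mod_cast hk) (by simp)
    rw [iteratedDerivWithin_univ] at this
    exact this.differentiableAt Filter.univ_mem
  rw [iteratedDeriv_succ]
  exact h1.hasDerivAt

/-- A continuous function on `[r, ∞)` with a polynomially decaying tail is bounded by a multiple of
`(1 + x)⁻ⁿ`. -/
lemma exists_bound_of_tail (n : ℕ) (f : ℝ → ℝ) (r R : ℝ) (hr : 0 ≤ r) (hR : 1 ≤ R)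
    (hc : ∀ x, r ≤ x → ContinuousAt f x) (ht : ∀ x, R ≤ x → |f x| ≤ (x ^ n)⁻¹) :
    ∃ K : ℝ, 0 ≤ K ∧ ∀ x, r ≤ x → |f x| ≤ K / (1 + x) ^ n := by
  obtain ⟨B, hB⟩ := (isCompact_Icc (a := r) (b := R)).exists_bound_of_continuousOn
    (f := f) (fun x hx => (hc x hx.1).continuousWithinAt)
  refine ⟨|B| * (1 + R) ^ n + 2 ^ n, by positivity, fun x hx => ?_⟩
  have hx0 : 0 ≤ x := hr.trans hx
  rw [le_div_iff₀ (by positivity)]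
  rcases le_total x R with h | h
  · have h1 : |f x| ≤ |B| := (hB x ⟨hx, h⟩).trans (le_abs_self B)
    have h2 : (1 + x) ^ n ≤ (1 + R) ^ n := by gcongr
    have h3 : (0:ℝ) ≤ 2 ^ n := by positivity
    have h4 : |f x| * (1 + x) ^ n ≤ |B| * (1 + R) ^ n := by gcongr
    linarith
  · have hx1 : 1 ≤ x := hR.trans h
    have h1 : (1 + x) ^ n ≤ (2 * x) ^ n := by gcongr; linarith
    have h2 : |f x| * (1 + x) ^ n ≤ (x ^ n)⁻¹ * (2 * x) ^ n := by
      gcongr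
      exact ht x h
    have h3 : (x ^ n)⁻¹ * (2 * x) ^ n = 2 ^ n := by
      rw [mul_pow]; field_simp
    have h4 : 0 ≤ |B| * (1 + R) ^ n := by positivity
    linarith

lemma abs_iteratedDeriv_abs {F : ℝ → ℝ} (hF : ∀ x, F (-x) = F x) (k : ℕ) (x : ℝ) :
    |iteratedDeriv k F x| = |iteratedDeriv k F (abs x)| := by
  rcases abs_choice x with h | h
  · rw [h]
  · rw [h]
    have := iteratedDeriv_comp_neg k F x
    simp only [hF] at this
    rw [this, smul_eq_mul, abs_mul, abs_pow, abs_neg, abs_one, one_pow, one_mul]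

/-- Decay of `F''` and `F'''` for an even potential, obtained by integrating the decay of the fourth
derivative twice from infinity and using continuity on the remaining compact interval. The radius
`r` excludes a possible singularity at the origin. -/
lemma potential_decay (F : ℝ → ℝ) (r R p : ℝ) (hr : 0 ≤ r) (hp : p ≤ -6)
    (hF : ∀ x, F (-x) = F x) (hreg : ∀ x, r ≤ |x| → ContDiffAt ℝ 4 F x)
    (hrR : r ≤ 1)
    (hdecay : ∀ x : ℝ, R ≤ |x| → |iteratedDeriv 4 F x| ≤ |x| ^ p)
    (hlim : ∀ k : ℕ, k ≤ 3 →
      Tendsto (fun x : ℝ => iteratedDeriv k F x) (Filter.cocompact ℝ) (nhds 0)) :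
    ∃ K : ℝ, 0 ≤ K ∧ ∀ x, r ≤ |x| →
      |iteratedDeriv 2 F x| ≤ K / (1 + |x|) ^ 4 ∧ |iteratedDeriv 3 F x| ≤ K / (1 + |x|) ^ 5 := by
  have hR1 : 1 ≤ max R 1 := le_max_right _ _
  have hpos : ∀ x : ℝ, max R 1 ≤ x → 0 < x := fun x hx => by linarith
  have hreg' : ∀ x, r ≤ x → ContDiffAt ℝ 4 F x := fun x hx => hreg x (hx.trans (le_abs_self x))
  have h4 : ∀ x, max R 1 ≤ x → |iteratedDeriv 4 F x| ≤ (x ^ 6)⁻¹ := by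
    intro x hx
    have hx0 := hpos x hx
    have := hdecay x (by rw [abs_of_pos hx0]; exact (le_max_left _ _).trans hx)
    rw [abs_of_pos hx0] at this
    refine this.trans ((Real.rpow_le_rpow_of_exponent_le (hR1.trans hx) hp).trans ?_)
    rw [Real.rpow_neg hx0.le]
    exact le_of_eq (by norm_cast)
  have hlim' : ∀ k : ℕ, k ≤ 3 → Tendsto (iteratedDeriv k F) atTop (nhds 0) := fun k hk =>
    (hlim k hk).mono_left atTop_le_cocompact
  have h3 : ∀ x, max R 1 ≤ x → |iteratedDeriv 3 F x| ≤ (x ^ 5)⁻¹ := by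
    refine abs_le_inv_pow_of_deriv 4 _ (iteratedDeriv 4 F) _ (by linarith)
      (fun x hx => hasDerivAt_iteratedDeriv (hreg' x ((hrR.trans hR1).trans hx)) 3 (by norm_num))
      (fun x hx => (h4 x hx).trans ?_) (hlim' 3 le_rfl)
    have := hpos x hx
    exact le_mul_of_one_le_left (by positivity) (by norm_num)
  have h2 : ∀ x, max R 1 ≤ x → |iteratedDeriv 2 F x| ≤ (x ^ 4)⁻¹ := by
    refine abs_le_inv_pow_of_deriv 3 _ (iteratedDeriv 3 F) _ (by linarith)
      (fun x hx => hasDerivAt_iteratedDeriv (hreg' x ((hrR.trans hR1).trans hx)) 2 (by norm_num))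
      (fun x hx => (h3 x hx).trans ?_) (hlim' 2 (by norm_num))
    have := hpos x hx
    exact le_mul_of_one_le_left (by positivity) (by norm_num)
  obtain ⟨K2, hK2, hb2⟩ := exists_bound_of_tail 4 _ r _ hr hR1
    (fun x hx => (hasDerivAt_iteratedDeriv (hreg' x hx) 2 (by norm_num)).continuousAt) h2
  obtain ⟨K3, hK3, hb3⟩ := exists_bound_of_tail 5 _ r _ hr hR1
    (fun x hx => (hasDerivAt_iteratedDeriv (hreg' x hx) 3 (by norm_num)).continuousAt) h3
  refine ⟨K2 + K3, by positivity, fun x hx => ?_⟩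
  rw [abs_iteratedDeriv_abs hF 2, abs_iteratedDeriv_abs hF 3]
  exact ⟨(hb2 _ hx).trans (by gcongr; linarith), (hb3 _ hx).trans (by gcongr; linarith)⟩

/-- Near the lattice point `s` the derivatives decay in `s`; consequently `F''` is bounded, and
Lipschitz along the interval of radius `ρ` around `s`, with constants decaying in `s`. -/
lemma potential_coeff (F : ℝ → ℝ) (r K : ℝ) (hK : 0 ≤ K)
    (hreg : ∀ x, r ≤ |x| → ContDiffAt ℝ 4 F x)
    (hb : ∀ x, r ≤ |x| →
      |iteratedDeriv 2 F x| ≤ K / (1 + |x|) ^ 4 ∧ |iteratedDeriv 3 F x| ≤ K / (1 + |x|) ^ 5)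
    (s ρ : ℝ) (hρ : ρ ≤ 3 / 4 * (1 + |s|)) (hr : ∀ z, |z - s| ≤ ρ → r ≤ |z|)
    (x y : ℝ) (hx : |x - s| ≤ ρ) (hy : |y - s| ≤ ρ) :
    |iteratedDeriv 2 F x| ≤ 1024 * K / (1 + |s|) ^ 4 ∧
      |iteratedDeriv 2 F x - iteratedDeriv 2 F y| ≤ 1024 * K / (1 + |s|) ^ 5 * |x - y| := by
  have hs := abs_nonneg s
  have hz : ∀ z, |z - s| ≤ ρ → (1 + |s|) / 4 ≤ 1 + |z| := by
    intro z hz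
    have := abs_sub_abs_le_abs_sub s z
    rw [abs_sub_comm] at this
    linarith
  have h2 : ∀ z, |z - s| ≤ ρ → |iteratedDeriv 2 F z| ≤ 1024 * K / (1 + |s|) ^ 4 := by
    intro z h
    refine (hb z (hr z h)).1.trans ?_
    calc K / (1 + |z|) ^ 4 ≤ K / ((1 + |s|) / 4) ^ 4 := by gcongr; exact hz z h
      _ = 256 * K / (1 + |s|) ^ 4 := by field_simp; norm_num
      _ ≤ 1024 * K / (1 + |s|) ^ 4 := by gcongr; norm_num
  have h3 : ∀ z, |z - s| ≤ ρ → |iteratedDeriv 3 F z| ≤ 1024 * K / (1 + |s|) ^ 5 := by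
    intro z h
    refine (hb z (hr z h)).2.trans ?_
    calc K / (1 + |z|) ^ 5 ≤ K / ((1 + |s|) / 4) ^ 5 := by gcongr; exact hz z h
      _ = 1024 * K / (1 + |s|) ^ 5 := by field_simp; norm_num
  refine ⟨h2 x hx, ?_⟩
  have := (convex_closedBall s ρ).norm_image_sub_le_of_norm_hasDerivWithin_le
    (f := iteratedDeriv 2 F) (f' := iteratedDeriv 3 F) (C := 1024 * K / (1 + |s|) ^ 5)
    (x := y) (y := x)
    (fun z h => (hasDerivAt_iteratedDeriv (hreg z (hr z (by simpa [Real.dist_eq] using h))) 2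
      (by norm_num)).hasDerivWithinAt)
    (fun z h => h3 z (by simpa [Real.dist_eq] using h))
    (by simpa [Real.dist_eq] using hy) (by simpa [Real.dist_eq] using hx)
  simpa [Real.norm_eq_abs] using this

/-! ### A Schur-type bound for lattice bilinear forms -/

lemma summable_weight : Summable (fun s : ℤ => 1 / (1 + |(s : ℝ)|) ^ 2) := by
  refine Summable.of_nonneg_of_le (fun s => by positivity) (fun s => ?_)
    ((Real.summable_one_div_int_pow (p := 2)).2 one_lt_two |>.add
      (summable_of_hasFiniteSupport (f := fun s : ℤ => if s = 0 then (1 : ℝ) else 0)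
        ((Set.finite_singleton 0).subset (by intro s; simp))))
  by_cases h : s = 0
  · simp [h]
  · have h0 : (0:ℝ) < |(s : ℝ)| := by positivity
    rw [if_neg h, add_zero, ← sq_abs (s : ℝ)]
    gcongr
    linarith

/-- Cauchy–Schwarz for square-summable sequences, with the two norms replaced by bounds. -/
lemma tsum_abs_mul_le (a b : ℤ → ℝ) (A B : ℝ) (hA : 0 ≤ A) (hB : 0 ≤ B)
    (ha : Summable fun i => (a i) ^ 2) (hb : Summable fun i => (b i) ^ 2)
    (ha' : ∑' i, (a i) ^ 2 ≤ A ^ 2) (hb' : ∑' i, (b i) ^ 2 ≤ B ^ 2) :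
    Summable (fun i => |a i| * |b i|) ∧ ∑' i, |a i| * |b i| ≤ A * B := by
  have h := Real.summable_and_inner_le_Lp_mul_Lq_tsum_of_nonneg Real.HolderConjugate.two_two
    (f := fun i => |a i|) (g := fun i => |b i|) (fun i => abs_nonneg _) (fun i => abs_nonneg _)
    (by simpa using ha) (by simpa using hb)
  refine ⟨h.1, h.2.trans ?_⟩
  simp only [Real.rpow_two, sq_abs, ← Real.sqrt_eq_rpow]
  gcongr
  · exact Real.sqrt_le_iff.2 ⟨hA, ha'⟩
  · exact Real.sqrt_le_iff.2 ⟨hB, hb'⟩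

/-- If the coefficients decay like `|s|⁻⁴` and the `ℓ²` norms of the factors grow at most linearly
in `s`, the form is absolutely summable and bounded by the product of the constants. -/
lemma schur_bound (c P Q : ℤ → ℤ → ℝ) (M A B : ℝ) (hM : 0 ≤ M) (hA : 0 ≤ A) (hB : 0 ≤ B)
    (hc : ∀ i s, |c i s| ≤ M / (1 + |(s : ℝ)|) ^ 4)
    (hPs : ∀ s, Summable fun i => (P i s) ^ 2)
    (hP : ∀ s : ℤ, ∑' i, (P i s) ^ 2 ≤ ((1 + |(s : ℝ)|) * A) ^ 2)
    (hQs : ∀ s, Summable fun i => (Q i s) ^ 2)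
    (hQ : ∀ s : ℤ, ∑' i, (Q i s) ^ 2 ≤ ((1 + |(s : ℝ)|) * B) ^ 2) :
    Summable (fun p : ℤ × ℤ => c p.1 p.2 * P p.1 p.2 * Q p.1 p.2) ∧
      |∑' i, ∑' s, c i s * P i s * Q i s| ≤ M * A * B * ∑' s : ℤ, 1 / (1 + |(s : ℝ)|) ^ 2 := by
  have hcs := fun s : ℤ => tsum_abs_mul_le (fun i => P i s) (fun i => Q i s) _ _
    (mul_nonneg (by positivity) hA) (mul_nonneg (by positivity) hB) (hPs s) (hQs s) (hP s) (hQ s)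
  -- The majorant, with the offset `s` as the outer variable.
  obtain ⟨G, hG⟩ : ∃ G : ℤ × ℤ → ℝ,
      G = fun p => M / (1 + |(p.1 : ℝ)|) ^ 4 * (|P p.2 p.1| * |Q p.2 p.1|) := ⟨_, rfl⟩
  have hG0 : 0 ≤ G := fun p => by simp only [hG, Pi.zero_apply]; positivity
  have hin : ∀ s : ℤ, ∑' i, G (s, i) ≤ M * A * B * (1 / (1 + |(s : ℝ)|) ^ 2) := by
    intro s
    simp only [hG]
    rw [tsum_mul_left]
    have h1 := mul_le_mul_of_nonneg_left (hcs s).2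
      (show 0 ≤ M / (1 + |(s : ℝ)|) ^ 4 by positivity)
    refine h1.trans (le_of_eq ?_)
    have h0 : 1 + |(s : ℝ)| ≠ 0 := by positivity
    field_simp
  have hsum := summable_weight.mul_left (M * A * B)
  have hins : Summable fun s : ℤ => ∑' i, G (s, i) :=
    Summable.of_nonneg_of_le (fun s => tsum_nonneg fun i => hG0 _) hin hsum
  have hrow : ∀ s : ℤ, Summable fun i => G (s, i) := by
    intro s
    simp only [hG]
    exact (hcs s).1.mul_left _
  have hGs : Summable G := (summable_prod_of_nonneg hG0).2 ⟨hrow, hins⟩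
  have hle : ∀ p : ℤ × ℤ, ‖c p.1 p.2 * P p.1 p.2 * Q p.1 p.2‖ ≤ G p.swap := by
    intro p
    simp only [hG, Prod.fst_swap, Prod.snd_swap, norm_mul, Real.norm_eq_abs, mul_assoc]
    gcongr
    exact hc _ _
  have hGs' : Summable fun p : ℤ × ℤ => G p.swap := (Equiv.prodComm ℤ ℤ).summable_iff.2 hGs
  have hS := Summable.of_norm_bounded hGs' hle
  refine ⟨hS, ?_⟩
  rw [← hS.tsum_prod (f := fun p : ℤ × ℤ => c p.1 p.2 * P p.1 p.2 * Q p.1 p.2),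
    ← Real.norm_eq_abs]
  refine (tsum_of_norm_bounded hGs'.hasSum hle).trans ?_
  have hswap : ∑' p : ℤ × ℤ, G p.swap = ∑' p, G p := (Equiv.prodComm ℤ ℤ).tsum_eq G
  rw [hswap, hGs.tsum_prod, ← tsum_mul_left]
  exact hins.tsum_le_tsum hin hsum

/-- The difference of two such forms that differ only in their coefficients. -/
lemma schur_diff (c d P Q : ℤ → ℤ → ℝ) (L M A B : ℝ)
    (hL : 0 ≤ L) (hM : 0 ≤ M) (hA : 0 ≤ A) (hB : 0 ≤ B)
    (hc : ∀ i s, |c i s| ≤ L / (1 + |(s : ℝ)|) ^ 4)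
    (hd : ∀ i s, |d i s| ≤ L / (1 + |(s : ℝ)|) ^ 4)
    (hcd : ∀ i s, |c i s - d i s| ≤ M / (1 + |(s : ℝ)|) ^ 4)
    (hPs : ∀ s, Summable fun i => (P i s) ^ 2)
    (hP : ∀ s : ℤ, ∑' i, (P i s) ^ 2 ≤ ((1 + |(s : ℝ)|) * A) ^ 2)
    (hQs : ∀ s, Summable fun i => (Q i s) ^ 2)
    (hQ : ∀ s : ℤ, ∑' i, (Q i s) ^ 2 ≤ ((1 + |(s : ℝ)|) * B) ^ 2) :
    |(∑' i, ∑' s, c i s * P i s * Q i s) - ∑' i, ∑' s, d i s * P i s * Q i s|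
      ≤ M * A * B * ∑' s : ℤ, 1 / (1 + |(s : ℝ)|) ^ 2 := by
  have h1 := (schur_bound c P Q L A B hL hA hB hc hPs hP hQs hQ).1
  have h2 := (schur_bound d P Q L A B hL hA hB hd hPs hP hQs hQ).1
  have h3 := (schur_bound (fun i s => c i s - d i s) P Q M A B hM hA hB hcd hPs hP hQs hQ).2
  rw [← h1.tsum_prod (f := fun p : ℤ × ℤ => c p.1 p.2 * P p.1 p.2 * Q p.1 p.2),
    ← h2.tsum_prod (f := fun p : ℤ × ℤ => d p.1 p.2 * P p.1 p.2 * Q p.1 p.2), ← h1.tsum_sub h2,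
    (h1.sub h2).tsum_prod]
  simpa only [sub_mul] using h3

/-! ### Finite differences over longer distances -/

lemma sum_sq_shift_nat (f : ℤ → ℝ) (hf : Summable fun i => (f (i + 1) - f i) ^ 2) (n : ℕ) :
    Summable (fun i => (f (i + n) - f i) ^ 2) ∧
      ∑' i, (f (i + n) - f i) ^ 2 ≤ (n : ℝ) ^ 2 * ∑' i, (f (i + 1) - f i) ^ 2 := by
  have hk : ∀ k : ℕ, HasSum (fun i => (f (i + k + 1) - f (i + k)) ^ 2)
      (∑' i, (f (i + 1) - f i) ^ 2) := fun k =>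
    (Equiv.addRight (k : ℤ)).hasSum_iff (f := fun i => (f (i + 1) - f i) ^ 2) |>.2 hf.hasSum
  have hs := (hasSum_sum (s := Finset.range n) fun k _ => hk k).mul_left (n : ℝ)
  have hle : ∀ i, (f (i + n) - f i) ^ 2
      ≤ n * ∑ k ∈ Finset.range n, (f (i + k + 1) - f (i + k)) ^ 2 := by
    intro i
    have h1 : f (i + n) - f i = ∑ k ∈ Finset.range n, (f (i + k + 1) - f (i + k)) := by
      have := Finset.sum_range_sub (fun k : ℕ => f (i + k)) n
      simp only [Nat.cast_add, Nat.cast_one, Nat.cast_zero, add_zero, ← add_assoc] at this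
      exact this.symm
    rw [h1]
    simpa using sq_sum_le_card_mul_sum_sq (s := Finset.range n)
      (f := fun k : ℕ => f (i + k + 1) - f (i + k))
  have hsm : Summable (fun i => (f (i + n) - f i) ^ 2) :=
    Summable.of_nonneg_of_le (fun i => sq_nonneg _) hle hs.summable
  refine ⟨hsm, (hsm.tsum_le_tsum hle hs.summable).trans (le_of_eq ?_)⟩
  rw [hs.tsum_eq]
  simp [sq, mul_assoc]

lemma sum_sq_shift (f : ℤ → ℝ) (hf : Summable fun i => (f (i + 1) - f i) ^ 2) (s : ℤ) :
    Summable (fun i => (f (i + s) - f i) ^ 2) ∧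
      ∑' i, (f (i + s) - f i) ^ 2 ≤ (s : ℝ) ^ 2 * ∑' i, (f (i + 1) - f i) ^ 2 := by
  obtain ⟨n, rfl | rfl⟩ := s.eq_nat_or_neg
  · simpa using sum_sq_shift_nat f hf n
  · have h := sum_sq_shift_nat f hf n
    have he : (fun i => (f (i + -(n : ℤ)) - f i) ^ 2)
        = (fun i => (f (i + n) - f i) ^ 2) ∘ (Equiv.addRight (-(n : ℤ))) := by
      funext i
      rw [Function.comp, Equiv.coe_addRight, neg_add_cancel_right]
      ring
    rw [he, (Equiv.addRight (-(n : ℤ))).summable_iff]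
    refine ⟨h.1, ?_⟩
    have := (Equiv.addRight (-(n : ℤ))).tsum_eq (fun i => (f (i + n) - f i) ^ 2)
    rw [Function.comp_def, this]
    simpa using h.2

lemma abs_shift_le (f : ℤ → ℝ) (D : ℝ) (hf : ∀ i, |f (i + 1) - f i| ≤ D) (i s : ℤ) :
    |f (i + s) - f i| ≤ |(s : ℝ)| * D := by
  have key : ∀ (n : ℕ) (j : ℤ), |f (j + n) - f j| ≤ n * D := by
    intro n
    induction n with
    | zero => intro j; simp
    | succ n ih =>
      intro j
      have h1 := hf (j + n)
      have h2 := ih j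
      have h3 := abs_add_le (f (j + n + 1) - f (j + n)) (f (j + n) - f j)
      have h4 : f (j + n + 1) - f (j + n) + (f (j + n) - f j) = f (j + (n + 1 : ℕ)) - f j := by
        push_cast
        rw [← add_assoc]
        ring
      rw [h4] at h3
      push_cast at h3 ⊢
      linarith
  obtain ⟨n, rfl | rfl⟩ := s.eq_nat_or_neg
  · simpa using key n i
  · have := key n (i + -(n : ℤ))
    rw [neg_add_cancel_right, abs_sub_comm] at this
    simpa using this

/-! ### Consequences of a finite `X_ε` norm -/

lemma nsq_nonneg {ε : ℝ} (hε : 0 < ε) (h : ℤ → ℝ) : 0 ≤ nsq ε h :=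
  mul_nonneg hε.le (tsum_nonneg fun _ => sq_nonneg _)

lemma Xsq_nonneg {ε : ℝ} (hε : 0 < ε) (fp fm : ℤ → ℝ) : 0 ≤ Xsq ε fp fm :=
  add_nonneg (add_nonneg (nsq_nonneg hε _) (nsq_nonneg hε _)) (nsq_nonneg hε _)

/-- The `X_ε` norm without its weight: `ε^(-1/2) ‖f‖_{X_ε}`, which controls the plain `ℓ²` norms of
`Df^±` and `f^⊥`, and hence also their sup norms. -/
def Xnorm (ε : ℝ) (fp fm : ℤ → ℝ) : ℝ := Real.sqrt (Xsq ε fp fm / ε)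

lemma Xnorm_nonneg (ε : ℝ) (fp fm : ℤ → ℝ) : 0 ≤ Xnorm ε fp fm := Real.sqrt_nonneg _

lemma abs_le_of_tsum_sq_le {a : ℤ → ℝ} {N : ℝ} (hN : 0 ≤ N) (ha : Summable fun i => (a i) ^ 2)
    (h : ∑' i, (a i) ^ 2 ≤ N ^ 2) (i : ℤ) : |a i| ≤ N :=
  abs_le_of_sq_le_sq ((ha.le_tsum i fun _ _ => sq_nonneg _).trans h) hN

lemma tsum_sq_le_Xnorm {ε : ℝ} (hε : 0 < ε) (fp fm : ℤ → ℝ) :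
    ∑' i, (Ds ε 1 fp i) ^ 2 ≤ Xnorm ε fp fm ^ 2 ∧ ∑' i, (Ds ε 1 fm i) ^ 2 ≤ Xnorm ε fp fm ^ 2 ∧
      ∑' i, (fp i - fm i) ^ 2 ≤ Xnorm ε fp fm ^ 2 := by
  have h1 := nsq_nonneg hε (Ds ε 1 fp)
  have h2 := nsq_nonneg hε (Ds ε 1 fm)
  have h3 := nsq_nonneg hε (fun i => fp i - fm i)
  have hX := Xsq_nonneg hε fp fm
  rw [Xnorm, Real.sq_sqrt (by positivity)]
  simp only [le_div_iff₀ hε, mul_comm _ ε]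
  simp only [Xsq, nsq] at *
  exact ⟨by linarith, by linarith, by linarith⟩

/-- `ℓ²` bounds for finite differences of a single chain over distance `s`. -/
lemma Ds_sq_bound {ε : ℝ} (f : ℤ → ℝ) (N : ℝ) (hs : Summable fun i => (Ds ε 1 f i) ^ 2)
    (hN : ∑' i, (Ds ε 1 f i) ^ 2 ≤ N ^ 2) (s : ℤ) :
    Summable (fun i => (Ds ε s f i) ^ 2) ∧ ∑' i, (Ds ε s f i) ^ 2 ≤ (|(s : ℝ)| * N) ^ 2 := by
  have he : ∀ t i, Ds ε t f i = f (i + t) / ε - f i / ε := fun t i => by rw [Ds, sub_div]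
  simp only [he] at *
  have h := sum_sq_shift (fun i => f i / ε) hs s
  refine ⟨h.1, h.2.trans ?_⟩
  rw [mul_pow, sq_abs]
  gcongr

lemma diff_sq_bound {ε : ℝ} (hε : 0 < ε) (hε1 : ε ≤ 1) (f : ℤ → ℝ) (N : ℝ)
    (hs : Summable fun i => (Ds ε 1 f i) ^ 2)
    (hN : ∑' i, (Ds ε 1 f i) ^ 2 ≤ N ^ 2) (s : ℤ) :
    Summable (fun i => (f (i + s) - f i) ^ 2) ∧
      ∑' i, (f (i + s) - f i) ^ 2 ≤ (|(s : ℝ)| * N) ^ 2 := by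
  have h := Ds_sq_bound f N hs hN s
  have hle : ∀ i, (f (i + s) - f i) ^ 2 ≤ (Ds ε s f i) ^ 2 := by
    intro i
    rw [Ds, div_pow, le_div_iff₀ (by positivity)]
    exact mul_le_of_le_one_right (sq_nonneg _) (pow_le_one₀ hε.le hε1)
  have hs' := Summable.of_nonneg_of_le (fun i => sq_nonneg _) hle h.1
  exact ⟨hs', (hs'.tsum_le_tsum hle h.1).trans h.2⟩

lemma XFin_bounds {ε : ℝ} (hε : 0 < ε) (hε1 : ε ≤ 1) (fp fm : ℤ → ℝ) (h : XFin ε fp fm) :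
    (∀ i s : ℤ, |fp (i + s) - fp i| ≤ |(s : ℝ)| * Xnorm ε fp fm) ∧
    (∀ i s : ℤ, |fm (i + s) - fm i| ≤ |(s : ℝ)| * Xnorm ε fp fm) ∧
    (∀ i s : ℤ, |fp (i + s) - fm i| ≤ (1 + |(s : ℝ)|) * Xnorm ε fp fm) := by
  obtain ⟨h1, h2, h3⟩ := tsum_sq_le_Xnorm hε fp fm
  have hN := Xnorm_nonneg ε fp fm
  have key : ∀ f : ℤ → ℝ, (Summable fun i => (Ds ε 1 f i) ^ 2) →
      ∑' i, (Ds ε 1 f i) ^ 2 ≤ Xnorm ε fp fm ^ 2 →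
      ∀ i s : ℤ, |f (i + s) - f i| ≤ |(s : ℝ)| * Xnorm ε fp fm := by
    intro f hf hf'
    have hb := diff_sq_bound hε hε1 f _ hf hf' 1
    refine fun i s => abs_shift_le f _ (fun i => ?_) i s
    exact abs_le_of_tsum_sq_le hN hb.1 (by simpa using hb.2) i
  refine ⟨key fp h.1 h1, key fm h.2.1 h2, fun i s => ?_⟩
  have ha := key fp h.1 h1 i s
  have hb := abs_le_of_tsum_sq_le hN h.2.2 h3 i
  have hc := abs_add_le (fp (i + s) - fp i) (fp i - fm i)
  rw [sub_add_sub_cancel] at hc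
  linarith

lemma XFin_sq_bounds {ε : ℝ} (hε : 0 < ε) (hε1 : ε ≤ 1) (fp fm : ℤ → ℝ) (h : XFin ε fp fm)
    (s : ℤ) :
    (Summable (fun i => (Ds ε s fp i) ^ 2) ∧
      ∑' i, (Ds ε s fp i) ^ 2 ≤ ((1 + |(s : ℝ)|) * (2 * Xnorm ε fp fm)) ^ 2) ∧
    (Summable (fun i => (Ds ε s fm i) ^ 2) ∧
      ∑' i, (Ds ε s fm i) ^ 2 ≤ ((1 + |(s : ℝ)|) * (2 * Xnorm ε fp fm)) ^ 2) ∧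
    (Summable (fun i => (fp (i + s) - fm i) ^ 2) ∧
      ∑' i, (fp (i + s) - fm i) ^ 2 ≤ ((1 + |(s : ℝ)|) * (2 * Xnorm ε fp fm)) ^ 2) := by
  obtain ⟨h1, h2, h3⟩ := tsum_sq_le_Xnorm hε fp fm
  have hN := Xnorm_nonneg ε fp fm
  have hs := abs_nonneg (s : ℝ)
  have hle : (|(s : ℝ)| * Xnorm ε fp fm) ^ 2 ≤ ((1 + |(s : ℝ)|) * (2 * Xnorm ε fp fm)) ^ 2 := by
    gcongr <;> linarith
  have hp := Ds_sq_bound fp _ h.1 h1 s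
  have hm := Ds_sq_bound fm _ h.2.1 h2 s
  have hd := diff_sq_bound hε hε1 fp _ h.1 h1 s
  have hpt : ∀ i, (fp (i + s) - fm i) ^ 2
      ≤ 2 * (fp (i + s) - fp i) ^ 2 + 2 * (fp i - fm i) ^ 2 := fun i => by
    nlinarith [sq_nonneg ((fp (i + s) - fp i) - (fp i - fm i))]
  have hsum := (hd.1.mul_left 2).add (h.2.2.mul_left 2)
  have hs' := Summable.of_nonneg_of_le (fun i => sq_nonneg _) hpt hsum
  refine ⟨⟨hp.1, hp.2.trans hle⟩, ⟨hm.1, hm.2.trans hle⟩, hs', ?_⟩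
  refine (hs'.tsum_le_tsum hpt hsum).trans ?_
  rw [(hd.1.mul_left 2).tsum_add (h.2.2.mul_left 2), tsum_mul_left, tsum_mul_left]
  have h4 : 0 ≤ |(s : ℝ)| * Xnorm ε fp fm ^ 2 := by positivity
  have h5 : 0 ≤ |(s : ℝ)| ^ 2 * Xnorm ε fp fm ^ 2 := by positivity
  have h6 : 0 ≤ Xnorm ε fp fm ^ 2 := by positivity
  nlinarith [hd.2]

lemma XFin_sub {ε : ℝ} {fp fm gp gm : ℤ → ℝ} (hf : XFin ε fp fm) (hg : XFin ε gp gm) :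
    XFin ε (fun i => fp i - gp i) (fun i => fm i - gm i) := by
  have key : ∀ a b c : ℤ → ℝ, (∀ i, c i = a i - b i) → (Summable fun i => (a i) ^ 2) →
      (Summable fun i => (b i) ^ 2) → Summable fun i => (c i) ^ 2 := by
    intro a b c hc ha hb
    refine Summable.of_nonneg_of_le (fun i => sq_nonneg _) (fun i => ?_)
      ((ha.mul_left 2).add (hb.mul_left 2))
    rw [hc]
    nlinarith [sq_nonneg (a i + b i)]
  exact ⟨key _ _ _ (fun i => by simp only [Ds]; ring) hf.1 hg.1,
    key _ _ _ (fun i => by simp only [Ds]; ring) hf.2.1 hg.2.1,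
    key _ _ _ (fun i => by ring) hf.2.2 hg.2.2⟩

/-- Configurations `X_ε`-close to the dislocation profile keep the deformed bond vectors within a
fixed fraction of the reference ones: the profile `q`, taking values in `[0, 1]`, leaves the bond
`(i, i + s)` within `1/2` of `s`, and the perturbation moves it by at most `(1 + |s|)/4`. -/
lemma config_bounds {ε : ℝ} (hε : 0 < ε) (hε1 : ε < 1 / 16) (q up um : ℤ → ℝ)
    (hq : ∀ i, 0 ≤ q i ∧ q i ≤ 1)
    (hfin : XFin ε (fun i => up i - q i / 2) (fun i => um i + q i / 2))
    (hX : Real.sqrt (Xsq ε (fun i => up i - q i / 2) (fun i => um i + q i / 2)) ≤ ε) :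
    (∀ i s : ℤ, s ≠ 0 → |up (i + s) - up i| ≤ 3 / 4 * |(s : ℝ)|) ∧
    (∀ i s : ℤ, s ≠ 0 → |um (i + s) - um i| ≤ 3 / 4 * |(s : ℝ)|) ∧
    (∀ i s : ℤ, |-(1 / 2) + up (i + s) - um i| ≤ 3 / 4 * (1 + |(s : ℝ)|)) := by
  have hb := XFin_bounds hε (by linarith) _ _ hfin
  have hN : Xnorm ε (fun i => up i - q i / 2) (fun i => um i + q i / 2) ≤ 1 / 4 := by
    refine Real.sqrt_le_iff.2 ⟨by norm_num, ?_⟩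
    have h1 := (Real.sqrt_le_left hε.le).1 hX
    rw [div_le_iff₀ hε]
    nlinarith
  obtain ⟨N, hNdef⟩ : ∃ N, N = Xnorm ε (fun i => up i - q i / 2) (fun i => um i + q i / 2) :=
    ⟨_, rfl⟩
  rw [← hNdef] at hb hN
  have hs1 : ∀ s : ℤ, s ≠ 0 → (1 : ℝ) ≤ |(s : ℝ)| := fun s hs => by
    exact_mod_cast Int.one_le_abs hs
  have hmul : ∀ s : ℤ, |(s : ℝ)| * N ≤ |(s : ℝ)| * (1 / 4) := fun s =>
    mul_le_mul_of_nonneg_left hN (abs_nonneg _)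
  refine ⟨fun i s hs => ?_, fun i s hs => ?_, fun i s => ?_⟩
  · have h1 := abs_le.1 (hb.1 i s)
    have h2 := hq i
    have h3 := hq (i + s)
    have h4 := hmul s
    have h5 := hs1 s hs
    exact abs_le.2 ⟨by linarith, by linarith⟩
  · have h1 := abs_le.1 (hb.2.1 i s)
    have h2 := hq i
    have h3 := hq (i + s)
    have h4 := hmul s
    have h5 := hs1 s hs
    exact abs_le.2 ⟨by linarith, by linarith⟩
  · have h1 := abs_le.1 (hb.2.2 i s)
    have h2 := hq i
    have h3 := hq (i + s)
    have h4 := hmul s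
    have h5 := abs_nonneg (s : ℝ)
    exact abs_le.2 ⟨by linarith, by linarith⟩

/-! ### The coefficients of the second variation -/

/-- The coefficient of the intra-chain bond `(i, i + s)`, set to zero at `s = 0`. -/
def chainCoeff (ε : ℝ) (V : ℝ → ℝ) (u : ℤ → ℝ) (i s : ℤ) : ℝ :=
  if s = 0 then 0 else iteratedDeriv 2 V ((s : ℝ) + ε * Ds ε s u i)

/-- The coefficient of the inter-chain bond `(i, i + s)`. -/
def crossCoeff (U : ℝ → ℝ) (up um : ℤ → ℝ) (i s : ℤ) : ℝ :=
  iteratedDeriv 2 U ((s : ℝ) - 1/2 + up (i + s) - um i)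

/-- Absorbing one factor `1 + |s|`, coming from the growth of the increments, in the decay. -/
lemma absorb_factor {K s x N : ℝ} (hK : 0 ≤ K) (hx : x ≤ (1 + |s|) * N) :
    K / (1 + |s|) ^ 5 * x ≤ K * N / (1 + |s|) ^ 4 := by
  have hs : 0 < 1 + |s| := by positivity
  calc _ ≤ K / (1 + |s|) ^ 5 * ((1 + |s|) * N) := by gcongr
    _ = _ := by field_simp

lemma chainCoeff_bounds {ε : ℝ} (hε : 0 < ε) (V : ℝ → ℝ) (K : ℝ) (hK : 0 ≤ K)
    (hreg : ∀ x, 1 / 4 ≤ |x| → ContDiffAt ℝ 4 V x)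
    (hV : ∀ x, 1 / 4 ≤ |x| →
      |iteratedDeriv 2 V x| ≤ K / (1 + |x|) ^ 4 ∧ |iteratedDeriv 3 V x| ≤ K / (1 + |x|) ^ 5)
    (u u' : ℤ → ℝ) (hu : ∀ i s : ℤ, s ≠ 0 → |u (i + s) - u i| ≤ 3 / 4 * |(s : ℝ)|)
    (hu' : ∀ i s : ℤ, s ≠ 0 → |u' (i + s) - u' i| ≤ 3 / 4 * |(s : ℝ)|) (N : ℝ) (hN : 0 ≤ N)
    (hd : ∀ i s : ℤ, |(u (i + s) - u' (i + s)) - (u i - u' i)| ≤ |(s : ℝ)| * N) (i s : ℤ) :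
    |chainCoeff ε V u i s| ≤ 1024 * K / (1 + |(s : ℝ)|) ^ 4 ∧
    |chainCoeff ε V u i s - chainCoeff ε V u' i s| ≤ 1024 * K * N / (1 + |(s : ℝ)|) ^ 4 := by
  by_cases hs : s = 0
  · simp only [chainCoeff, if_pos hs, sub_zero, abs_zero]
    exact ⟨by positivity, by positivity⟩
  have he : ∀ w : ℤ → ℝ, ε * Ds ε s w i = w (i + s) - w i := fun w => by
    rw [Ds, mul_div_cancel₀ _ hε.ne']
  simp only [chainCoeff, if_neg hs, he]
  have hs1 : (1 : ℝ) ≤ |(s : ℝ)| := by exact_mod_cast Int.one_le_abs hs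
  have h := potential_coeff V (1 / 4) K hK hreg hV s (3 / 4 * |(s : ℝ)|) (by linarith)
    (fun z hz => by
      have := abs_sub_abs_le_abs_sub (s : ℝ) z
      rw [abs_sub_comm] at this
      linarith)
    (s + (u (i + s) - u i)) (s + (u' (i + s) - u' i))
    (by simpa using hu i s hs) (by simpa using hu' i s hs)
  refine ⟨h.1, h.2.trans (absorb_factor (by positivity) ?_)⟩
  have h1 := hd i s
  have h2 : (s : ℝ) + (u (i + s) - u i) - (s + (u' (i + s) - u' i))
      = (u (i + s) - u' (i + s)) - (u i - u' i) := by ring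
  rw [h2]
  linarith

lemma crossCoeff_bounds (U : ℝ → ℝ) (K : ℝ) (hK : 0 ≤ K)
    (hreg : ∀ x, 0 ≤ |x| → ContDiffAt ℝ 4 U x)
    (hU : ∀ x, 0 ≤ |x| →
      |iteratedDeriv 2 U x| ≤ K / (1 + |x|) ^ 4 ∧ |iteratedDeriv 3 U x| ≤ K / (1 + |x|) ^ 5)
    (up um up' um' : ℤ → ℝ)
    (hu : ∀ i s : ℤ, |-(1 / 2) + up (i + s) - um i| ≤ 3 / 4 * (1 + |(s : ℝ)|))
    (hu' : ∀ i s : ℤ, |-(1 / 2) + up' (i + s) - um' i| ≤ 3 / 4 * (1 + |(s : ℝ)|)) (N : ℝ)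
    (hd : ∀ i s : ℤ, |(up (i + s) - up' (i + s)) - (um i - um' i)| ≤ (1 + |(s : ℝ)|) * N)
    (i s : ℤ) :
    |crossCoeff U up um i s| ≤ 1024 * K / (1 + |(s : ℝ)|) ^ 4 ∧
    |crossCoeff U up um i s - crossCoeff U up' um' i s|
      ≤ 1024 * K * N / (1 + |(s : ℝ)|) ^ 4 := by
  have he : ∀ a b : ℝ, (s : ℝ) - 1 / 2 + a - b - s = -(1 / 2) + a - b := fun a b => by ring
  have h := potential_coeff U 0 K hK hreg hU s (3 / 4 * (1 + |(s : ℝ)|)) le_rfl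
    (fun z _ => abs_nonneg z)
    (s - 1 / 2 + up (i + s) - um i) (s - 1 / 2 + up' (i + s) - um' i)
    (by rw [he]; exact hu i s) (by rw [he]; exact hu' i s)
  refine ⟨h.1, h.2.trans (absorb_factor (by positivity) ?_)⟩
  have h2 : (s : ℝ) - 1 / 2 + up (i + s) - um i - (s - 1 / 2 + up' (i + s) - um' i)
      = (up (i + s) - up' (i + s)) - (um i - um' i) := by ring
  rw [h2]
  exact hd i s

/-- The second variation as a combination of three absolutely convergent forms: the two chains and
their interaction. -/
lemma d2Ea_eq (ε : ℝ) (V U : ℝ → ℝ) (up um fp fm gp gm : ℤ → ℝ)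
    (hp : Summable fun p : ℤ × ℤ =>
      chainCoeff ε V up p.1 p.2 * Ds ε p.2 fp p.1 * Ds ε p.2 gp p.1)
    (hm : Summable fun p : ℤ × ℤ =>
      chainCoeff ε V um p.1 p.2 * Ds ε p.2 fm p.1 * Ds ε p.2 gm p.1) :
    d2Ea ε V U up um fp fm gp gm =
      ε * (1 / 2 * ((∑' i, ∑' s, chainCoeff ε V up i s * Ds ε s fp i * Ds ε s gp i) +
        ∑' i, ∑' s, chainCoeff ε V um i s * Ds ε s fm i * Ds ε s gm i)) +
      ε * ∑' i, ∑' s, crossCoeff U up um i s * (fp (i + s) - fm i) * (gp (i + s) - gm i) := by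
  rw [d2Ea]
  congr 2
  rw [← hp.tsum_prod (f := fun p : ℤ × ℤ =>
      chainCoeff ε V up p.1 p.2 * Ds ε p.2 fp p.1 * Ds ε p.2 gp p.1),
    ← hm.tsum_prod (f := fun p : ℤ × ℤ =>
      chainCoeff ε V um p.1 p.2 * Ds ε p.2 fm p.1 * Ds ε p.2 gm p.1),
    ← hp.tsum_add hm, ← tsum_mul_left, ((hp.add hm).mul_left _).tsum_prod]
  refine tsum_congr fun i => tsum_congr fun s => ?_
  by_cases hs : s = 0 <;> simp [chainCoeff, hs]

/-! ### The Lipschitz estimate -/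

theorem stmt17
    (V U : ℝ → ℝ) (R θ : ℝ) (hR : 0 < R) (hθ : 0 < θ)
    (hVeven : ∀ x : ℝ, V (-x) = V x) (hUeven : ∀ x : ℝ, U (-x) = U x)
    (hVreg : ContDiffOn ℝ 4 V {x : ℝ | x ≠ 0}) (hUreg : ContDiff ℝ 4 U)
    (hVdecay : ∀ x : ℝ, R ≤ |x| → |iteratedDeriv 4 V x| ≤ |x| ^ (-(8:ℝ) - θ))
    (hUdecay : ∀ x : ℝ, R ≤ |x| → |iteratedDeriv 4 U x| ≤ |x| ^ (-(6:ℝ) - θ))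
    (hVlim : ∀ k : ℕ, k ≤ 3 →
      Tendsto (fun x : ℝ => iteratedDeriv k V x) (Filter.cocompact ℝ) (nhds 0))
    (hUlim : ∀ k : ℕ, k ≤ 3 →
      Tendsto (fun x : ℝ => iteratedDeriv k U x) (Filter.cocompact ℝ) (nhds 0))
    (γ : ℝ → ℝ)
    (hγdef : ∀ ξ : ℝ, γ ξ = ∑' s : ℤ, (U ((s : ℝ) - 1/2 + ξ) - U ((s : ℝ) - 1/2)))
    (α : ℝ)
    (hαdef : α = ∑' s : ℤ, if s = 0 then 0 else (1/2) * (s : ℝ) ^ 2 * iteratedDeriv 2 V (s : ℝ))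
    (hα : 0 < α)
    (hγnn : ∀ ξ : ℝ, 0 ≤ γ ξ) (hγzero : ∀ ξ : ℝ, γ ξ = 0 ↔ ∃ n : ℤ, ξ = (n : ℝ))
    (hγ'' : 0 < iteratedDeriv 2 γ 0)
    (φ : ℝ → ℝ) (hφreg : ContDiff ℝ 2 φ) (hφmono : StrictMono φ)
    (hφode : ∀ x : ℝ, -(α/2) * iteratedDeriv 2 φ x + deriv γ (φ x) = 0)
    (hφbot : Tendsto φ atBot (nhds 0)) (hφtop : Tendsto φ atTop (nhds 1))
    (hφ0 : φ 0 = 1/2)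
    :
    ∃ ε₀ : ℝ, 0 < ε₀ ∧ ∃ C : ℝ, 0 < C ∧
      ∀ ε : ℝ, 0 < ε → ε < ε₀ →
        ∀ up um up' um' : ℤ → ℝ,
          XFin ε (fun i : ℤ => up i - φ (ε * i) / 2) (fun i : ℤ => um i + φ (ε * i) / 2) →
          Real.sqrt (Xsq ε (fun i : ℤ => up i - φ (ε * i) / 2)
            (fun i : ℤ => um i + φ (ε * i) / 2)) ≤ ε →
          XFin ε (fun i : ℤ => up' i - φ (ε * i) / 2) (fun i : ℤ => um' i + φ (ε * i) / 2) →
          Real.sqrt (Xsq ε (fun i : ℤ => up' i - φ (ε * i) / 2)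
            (fun i : ℤ => um' i + φ (ε * i) / 2)) ≤ ε →
          ∀ fp fm gp gm : ℤ → ℝ, XFin ε fp fm → XFin ε gp gm →
            |d2Ea ε V U up um fp fm gp gm - d2Ea ε V U up' um' fp fm gp gm| ≤
              C * ε ^ (-(1:ℝ)/2) *
                Real.sqrt (Xsq ε (fun i : ℤ => up i - up' i) (fun i : ℤ => um i - um' i)) *
                Real.sqrt (Xsq ε fp fm) * Real.sqrt (Xsq ε gp gm) := by
  have hVreg' : ∀ x : ℝ, 1 / 4 ≤ |x| → ContDiffAt ℝ 4 V x := fun x hx =>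
    hVreg.contDiffAt (isOpen_ne.mem_nhds (by
      rintro rfl
      norm_num at hx))
  obtain ⟨KV, hKV, hV⟩ := potential_decay V (1 / 4) R (-8 - θ) (by norm_num) (by linarith) hVeven
    hVreg' (by norm_num) hVdecay hVlim
  obtain ⟨KU, hKU, hU⟩ := potential_decay U 0 R (-6 - θ) le_rfl (by linarith) hUeven
    (fun x _ => hUreg.contDiffAt) (by norm_num) hUdecay hUlim
  obtain ⟨S, hS⟩ : ∃ S : ℝ, S = ∑' s : ℤ, 1 / (1 + |(s : ℝ)|) ^ 2 := ⟨_, rfl⟩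
  have hS0 : 0 ≤ S := hS ▸ tsum_nonneg fun s => by positivity
  have hφ : ∀ x, 0 ≤ φ x ∧ φ x ≤ 1 := fun x =>
    ⟨hφmono.monotone.le_of_tendsto hφbot x, hφmono.monotone.ge_of_tendsto hφtop x⟩
  refine ⟨1 / 16, by norm_num, 4096 * (KV + KU) * S + 1, by positivity, ?_⟩
  intro ε hε hε1 up um up' um' hfin hX hfin' hX' fp fm gp gm hf hg
  have hε' : ε ≤ 1 := by linarith
  obtain ⟨c1, c2, c3⟩ := config_bounds hε hε1 (fun i => φ (ε * i)) up um (fun i => hφ _) hfin hX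
  obtain ⟨c1', c2', c3'⟩ :=
    config_bounds hε hε1 (fun i => φ (ε * i)) up' um' (fun i => hφ _) hfin' hX'
  have hh : XFin ε (fun i => up i - up' i) (fun i => um i - um' i) := by
    have := XFin_sub hfin hfin'
    simpa only [sub_sub_sub_cancel_right, add_sub_add_right_eq_sub] using this
  obtain ⟨d1, d2, d3⟩ := XFin_bounds hε hε' _ _ hh
  obtain ⟨N, hN⟩ : ∃ N, N = Xnorm ε (fun i => up i - up' i) (fun i => um i - um' i) := ⟨_, rfl⟩
  have hN0 : 0 ≤ N := hN ▸ Xnorm_nonneg _ _ _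
  rw [← hN] at d1 d2 d3
  have e1 := chainCoeff_bounds hε V KV hKV hVreg' hV up up' c1 c1' N hN0 d1
  have e2 := chainCoeff_bounds hε V KV hKV hVreg' hV um um' c2 c2' N hN0 d2
  have e3 := crossCoeff_bounds U KU hKU (fun x _ => hUreg.contDiffAt) hU up um up' um' c3 c3' N d3
  -- Size bounds for the coefficients of the primed configuration, by comparing it with itself.
  have e1' := chainCoeff_bounds hε V KV hKV hVreg' hV up' up' c1' c1' N hN0
    (fun i s => by simpa using mul_nonneg (abs_nonneg (s : ℝ)) hN0)
  have e2' := chainCoeff_bounds hε V KV hKV hVreg' hV um' um' c2' c2' N hN0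
    (fun i s => by simpa using mul_nonneg (abs_nonneg (s : ℝ)) hN0)
  have e3' := crossCoeff_bounds U KU hKU (fun x _ => hUreg.contDiffAt) hU up' um' up' um' c3' c3' N
    (fun i s => by simpa using mul_nonneg (by positivity : 0 ≤ 1 + |(s : ℝ)|) hN0)
  have F := XFin_sq_bounds hε hε' fp fm hf
  have G := XFin_sq_bounds hε hε' gp gm hg
  have hA0 := Xnorm_nonneg ε fp fm
  have hB0 := Xnorm_nonneg ε gp gm
  have hA2 : 0 ≤ 2 * Xnorm ε fp fm := by positivity
  have hB2 : 0 ≤ 2 * Xnorm ε gp gm := by positivity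
  have hLV : 0 ≤ 1024 * KV := by positivity
  have hLU : 0 ≤ 1024 * KU := by positivity
  have chain : ∀ (w f g : ℤ → ℝ),
      (∀ i s : ℤ, |chainCoeff ε V w i s| ≤ 1024 * KV / (1 + |(s : ℝ)|) ^ 4) →
      (∀ s, Summable (fun i => (Ds ε s f i) ^ 2) ∧
        ∑' i, (Ds ε s f i) ^ 2 ≤ ((1 + |(s : ℝ)|) * (2 * Xnorm ε fp fm)) ^ 2) →
      (∀ s, Summable (fun i => (Ds ε s g i) ^ 2) ∧
        ∑' i, (Ds ε s g i) ^ 2 ≤ ((1 + |(s : ℝ)|) * (2 * Xnorm ε gp gm)) ^ 2) →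
      Summable fun p : ℤ × ℤ => chainCoeff ε V w p.1 p.2 * Ds ε p.2 f p.1 * Ds ε p.2 g p.1 :=
    fun w f g hw hf hg => (schur_bound (chainCoeff ε V w) (fun i s => Ds ε s f i)
      (fun i s => Ds ε s g i) _ _ _ hLV hA2 hB2 hw (fun s => (hf s).1) (fun s => (hf s).2)
      (fun s => (hg s).1) (fun s => (hg s).2)).1
  rw [d2Ea_eq ε V U up um fp fm gp gm
      (chain up fp gp (fun i s => (e1 i s).1) (fun s => (F s).1) (fun s => (G s).1))
      (chain um fm gm (fun i s => (e2 i s).1) (fun s => (F s).2.1) (fun s => (G s).2.1)),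
    d2Ea_eq ε V U up' um' fp fm gp gm
      (chain up' fp gp (fun i s => (e1' i s).1) (fun s => (F s).1) (fun s => (G s).1))
      (chain um' fm gm (fun i s => (e2' i s).1) (fun s => (F s).2.1) (fun s => (G s).2.1))]
  have t1 := schur_diff (chainCoeff ε V up) (chainCoeff ε V up') (fun i s => Ds ε s fp i)
    (fun i s => Ds ε s gp i) _ _ _ _ hLV (mul_nonneg hLV hN0) hA2 hB2 (fun i s => (e1 i s).1)
    (fun i s => (e1' i s).1) (fun i s => (e1 i s).2) (fun s => (F s).1.1) (fun s => (F s).1.2)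
    (fun s => (G s).1.1) (fun s => (G s).1.2)
  have t2 := schur_diff (chainCoeff ε V um) (chainCoeff ε V um') (fun i s => Ds ε s fm i)
    (fun i s => Ds ε s gm i) _ _ _ _ hLV (mul_nonneg hLV hN0) hA2 hB2 (fun i s => (e2 i s).1)
    (fun i s => (e2' i s).1) (fun i s => (e2 i s).2) (fun s => (F s).2.1.1)
    (fun s => (F s).2.1.2) (fun s => (G s).2.1.1) (fun s => (G s).2.1.2)
  have t3 := schur_diff (crossCoeff U up um) (crossCoeff U up' um')
    (fun i s => fp (i + s) - fm i) (fun i s => gp (i + s) - gm i) _ _ _ _ hLU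
    (mul_nonneg hLU hN0) hA2 hB2 (fun i s => (e3 i s).1)
    (fun i s => (e3' i s).1) (fun i s => (e3 i s).2) (fun s => (F s).2.2.1)
    (fun s => (F s).2.2.2) (fun s => (G s).2.2.1) (fun s => (G s).2.2.2)
  rw [← hS] at t1 t2 t3
  -- Converting the unweighted norms back to `X_ε` norms.
  have hsq : ∀ a b : ℤ → ℝ, Xnorm ε a b = Real.sqrt (Xsq ε a b) / Real.sqrt ε := fun a b => by
    rw [Xnorm, Real.sqrt_div' _ hε.le]
  have hpow : ε ^ (-(1:ℝ)/2) = (Real.sqrt ε)⁻¹ := by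
    rw [Real.sqrt_eq_rpow, ← Real.rpow_neg hε.le]
    norm_num
  have hNeq : ε ^ (-(1:ℝ)/2) *
      Real.sqrt (Xsq ε (fun i : ℤ => up i - up' i) (fun i : ℤ => um i - um' i)) = N := by
    rw [hN, hsq, hpow, mul_comm, div_eq_mul_inv]
  have hprod : Real.sqrt (Xsq ε fp fm) * Real.sqrt (Xsq ε gp gm)
      = ε * (Xnorm ε fp fm * Xnorm ε gp gm) := by
    have h0 : Real.sqrt ε ≠ 0 := (Real.sqrt_pos.2 hε).ne'
    rw [hsq, hsq]
    field_simp
    rw [Real.sq_sqrt hε.le]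
  rw [mul_assoc _ (ε ^ _), hNeq, mul_assoc _ (Real.sqrt _), hprod]
  generalize Xnorm ε fp fm = A at *
  generalize Xnorm ε gp gm = B at *
  rw [show ∀ a b c a' b' c' : ℝ, ε * (1 / 2 * (a + b)) + ε * c - (ε * (1 / 2 * (a' + b')) + ε * c')
    = ε * (1 / 2 * ((a - a') + (b - b')) + (c - c')) from fun a b c a' b' c' => by ring,
    abs_mul, abs_of_pos hε]
  have hP : 0 ≤ N * (A * B) := by positivity
  calc _ ≤ ε * (4096 * (KV + KU) * S * (N * (A * B))) := by
        gcongr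
        rw [abs_le] at t1 t2 t3 ⊢
        constructor <;> linarith
    _ ≤ ε * ((4096 * (KV + KU) * S + 1) * (N * (A * B))) := by
        gcongr
        linarith
    _ = _ := by ring
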